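/- Let N ≥ 1, 1 < p < q < ∞, and s ∈ ℝ with s > −N/p. Let v, z : ℝ^N → [0,∞) be measurable functions, and define C(|x|) = ∫_{B(0,|x|)} v(y) dy and A(x) = ( (1/|B(0,|x|)|) ∫_{B(0,|x|)} ( v(y)^p / z(y) )^{1/(p−1)} dy )^{−q/p'} ( C(|x|)/|B(0,|x|)| )^q v(x). Suppose D₁ (q')^{1/q'} q^{1/q} < 1, where D₁ = sup_{x ≠ 0} [ ( ∫_{ℝ^N \ B(0,|x|)} A(y) C(|y|)^{−q} / |y|^{sq} dy )^{1/q} ( ∫_{B(0,|x|)} ( A(y) v(y)^{−q} / |y|^{sq} )^{1−q'} dy )^{1/q'} ] < ∞. Then there exists a constant C > 0, independent of u, such that for every measurable u : ℝ^N → ℂ with A^{1/q} u / |x|^s ∈ L^p(ℝ^N) ∩ L^q(ℝ^N) and A^{1/q} u / |x|^s not identically zero, one has ∫_{ℝ^N} ( (A(x)^{1/q} |u(x)| / |x|^s)^p / ‖A^{1/q} u / |·|^s‖_{L^p}^p ) log( (A(x)^{1/q} |u(x)| / |x|^s)^p / ‖A^{1/q} u / |·|^s‖_{L^p}^p ) dx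 ≤ ( q/(q−p) ) log( C ( ∫_{ℝ^N} ( ∫_{ℝ^N} |u(x) − u(y)|^p / |x−y|^{N+sp} · z(x) dx )^{q/p} v(y) dy )^{p/q} / ‖A^{1/q} u / |·|^s‖_{L^p}^p ). -/

import Mathlib

open MeasureTheory Metric ENNReal

/-!
Jensen's inequality for the probability density `f = Φ ^ p / ‖Φ‖_p ^ p` bounds the entropy by a
multiple of the logarithm of `‖Φ‖_q / ‖Φ‖_p`, so it remains to bound `‖Φ‖_q` by the weighted
fractional energy. Write `u y` as the `v`-average over the ball `|x| < |y|` of `u y - u x` and of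
`u x`. By Hölder's inequality with weight `z`, the average of `u y - u x` is controlled by the
energy density at `y`, because `|x - y| ≤ 2 |y|` there. The average of `u x` is a Hardy operator; by
the weighted Hardy inequality its contribution is at most `D₁ (q')^{1/q'} q^{1/q} ‖Φ‖_q`, which the
smallness assumption lets us absorb on the left.
-/

lemma mul_log_le_rpow_div_add {r t Y : ℝ} (hr : 1 < r) (ht : 0 ≤ t) (hY : 0 < Y) :
    t * Real.log t ≤ (t ^ r / Y + (Real.log Y - 1) * t) / (r - 1) := by
  rw [le_div_iff₀ (sub_pos.2 hr)]
  rcases ht.eq_or_lt with rfl | ht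
  · simp [Real.zero_rpow (by linarith : r ≠ 0)]
  have hlog : (r - 1) * Real.log t - Real.log Y ≤ t ^ (r - 1) / Y - 1 := by
    have h := Real.log_le_sub_one_of_pos (div_pos (Real.rpow_pos_of_pos ht (r - 1)) hY)
    rwa [Real.log_div (Real.rpow_pos_of_pos ht _).ne' hY.ne', Real.log_rpow ht] at h
  have hpow : t ^ r = t * t ^ (r - 1) := by
    rw [← Real.rpow_one_add' ht.le (by linarith), add_sub_cancel]
  rw [hpow]
  linear_combination t * hlog

section
variable {α : Type*} [MeasurableSpace α] {μ : Measure α}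

lemma lintegral_ofReal_sub_lintegral_ofReal_neg_le {f ψ : α → ℝ} (hψ : Integrable ψ μ)
    (hf : f ≤ ψ) :
    ((∫⁻ x, ENNReal.ofReal (f x) ∂μ : ℝ≥0∞) : EReal)
      - ((∫⁻ x, ENNReal.ofReal (-f x) ∂μ : ℝ≥0∞) : EReal) ≤ ((∫ x, ψ x ∂μ : ℝ) : EReal) := by
  have hneg : ∫⁻ x, ENNReal.ofReal (-ψ x) ∂μ ≠ ∞ := hψ.neg.lintegral_lt_top.ne
  have hle : ∫⁻ x, ENNReal.ofReal (f x) ∂μ + ∫⁻ x, ENNReal.ofReal (-ψ x) ∂μ ≤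
      ∫⁻ x, ENNReal.ofReal (ψ x) ∂μ + ∫⁻ x, ENNReal.ofReal (-f x) ∂μ := by
    have hψm := hψ.aestronglyMeasurable.aemeasurable
    have hψm_neg : AEMeasurable (fun x ↦ -ψ x) μ := hψm.neg
    rw [← lintegral_add_right' _ hψm_neg.ennreal_ofReal,
      ← lintegral_add_left' hψm.ennreal_ofReal]
    refine lintegral_mono fun x ↦ ?_
    have := hf x
    rcases le_total 0 (f x) with h | h
    · rw [ENNReal.ofReal_of_nonpos (by linarith : -ψ x ≤ 0), add_zero]
      exact (ENNReal.ofReal_le_ofReal this).trans le_self_add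
    · rw [ENNReal.ofReal_of_nonpos h, zero_add]
      exact (ENNReal.ofReal_le_ofReal (by linarith)).trans le_add_self
  rw [integral_eq_lintegral_pos_part_sub_lintegral_neg_part hψ, EReal.coe_sub,
    EReal.coe_ennreal_toReal hψ.lintegral_lt_top.ne, EReal.coe_ennreal_toReal hneg]
  refine EReal.sub_le_of_le_add ?_
  rw [sub_eq_add_neg, add_right_comm, ← sub_eq_add_neg]
  refine (EReal.le_sub_iff_add_le (.inl (EReal.coe_ennreal_ne_bot _)) (.inl ?_)).2
    (by exact_mod_cast hle)
  simpa using hneg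

/-- The entropy `∫ f log f` of a density `f`, encoded as the difference of the lower integrals of
the positive and negative parts of `f log f`; in `EReal` it is `⊥` when both are infinite. -/
noncomputable def entropy (μ : Measure α) (f : α → ℝ) : EReal :=
  ((∫⁻ x, ENNReal.ofReal (f x * Real.log (f x)) ∂μ : ℝ≥0∞) : EReal)
    - ((∫⁻ x, ENNReal.ofReal (-(f x * Real.log (f x))) ∂μ : ℝ≥0∞) : EReal)

lemma entropy_le_log_integral_rpow {r : ℝ} (hr : 1 < r) {f : α → ℝ} (hf : 0 ≤ f)
    (hf₁ : ∫ x, f x ∂μ = 1) (hfr : Integrable (fun x ↦ f x ^ r) μ) :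
    entropy μ f ≤ ((1 / (r - 1) * Real.log (∫ x, f x ^ r ∂μ) : ℝ) : EReal) := by
  have hfi : Integrable f μ := .of_integral_ne_zero (by simp [hf₁])
  set Y := ∫ x, f x ^ r ∂μ
  have hY : 0 < Y := by
    have hsupp : Function.support (fun x ↦ f x ^ r) = Function.support f := by
      ext x
      simp [Real.rpow_eq_zero (hf x) (by linarith : r ≠ 0)]
    rw [integral_pos_iff_support_of_nonneg (fun x ↦ Real.rpow_nonneg (hf x) r) hfr, hsupp,
      ← integral_pos_iff_support_of_nonneg hf hfi, hf₁]
    exact one_pos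
  let ψ (x : α) := (f x ^ r / Y + (Real.log Y - 1) * f x) / (r - 1)
  have hψ : Integrable ψ μ := ((hfr.div_const Y).add (hfi.const_mul _)).div_const _
  have hint : ∫ x, ψ x ∂μ = 1 / (r - 1) * Real.log Y := by
    rw [integral_div, integral_add (hfr.div_const Y) (hfi.const_mul _), integral_div,
      integral_const_mul, hf₁, div_self hY.ne']
    ring
  rw [← hint]
  exact lintegral_ofReal_sub_lintegral_ofReal_neg_le hψ
    fun x ↦ mul_log_le_rpow_div_add hr (hf x) hY

lemma lintegral_rpow_eq_zero_iff {a : ℝ} {f : α → ℝ≥0∞} (hf : Measurable f) (ha : 0 < a) :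
    ∫⁻ x, f x ^ a ∂μ = 0 ↔ ∀ᵐ x ∂μ, f x = 0 := by
  rw [lintegral_eq_zero_iff (hf.pow_const a)]
  simp only [Filter.EventuallyEq, Pi.zero_apply, ENNReal.rpow_eq_zero_iff_of_pos ha]

lemma integral_toReal_rpow {a : ℝ} {f : α → ℝ≥0∞} (hf : Measurable f)
    (hfa : ∫⁻ x, f x ^ a ∂μ ≠ ∞) :
    ∫ x, (f x).toReal ^ a ∂μ = (∫⁻ x, f x ^ a ∂μ).toReal := by
  simp only [ENNReal.toReal_rpow]
  exact integral_toReal (hf.pow_const a).aemeasurable (ae_lt_top (hf.pow_const a) hfa)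

lemma integrable_toReal_rpow {a : ℝ} {f : α → ℝ≥0∞} (hf : Measurable f)
    (hfa : ∫⁻ x, f x ^ a ∂μ ≠ ∞) : Integrable (fun x ↦ (f x).toReal ^ a) μ := by
  simp only [ENNReal.toReal_rpow]
  exact integrable_toReal_of_lintegral_ne_top (hf.pow_const a).aemeasurable hfa

theorem entropy_rpow_div_le {p q : ℝ} (hp : 0 < p) (hpq : p < q) {Φ : α → ℝ≥0∞}
    (hΦ : Measurable Φ) (hΦ₀ : ¬ ∀ᵐ x ∂μ, Φ x = 0) (hΦp : ∫⁻ x, Φ x ^ p ∂μ ≠ ∞)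
    (hΦq : ∫⁻ x, Φ x ^ q ∂μ ≠ ∞) :
    entropy μ (fun x ↦ (Φ x).toReal ^ p / (∫⁻ x, Φ x ^ p ∂μ).toReal) ≤
      ((q / (q - p) : ℝ) : EReal) *
        ENNReal.log ((∫⁻ x, Φ x ^ q ∂μ) ^ (p / q) / ∫⁻ x, Φ x ^ p ∂μ) := by
  have hq : 0 < q := hp.trans hpq
  have hΦp₀ : ∫⁻ x, Φ x ^ p ∂μ ≠ 0 := (lintegral_rpow_eq_zero_iff hΦ hp).not.2 hΦ₀
  have hΦq₀ : ∫⁻ x, Φ x ^ q ∂μ ≠ 0 := (lintegral_rpow_eq_zero_iff hΦ hq).not.2 hΦ₀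
  have hp_int := integral_toReal_rpow hΦ hΦp
  have hq_int := integral_toReal_rpow hΦ hΦq
  set Ip := ∫⁻ x, Φ x ^ p ∂μ
  set Iq := ∫⁻ x, Φ x ^ q ∂μ
  have hIp : 0 < Ip.toReal := ENNReal.toReal_pos hΦp₀ hΦp
  have hIq : 0 < Iq.toReal := ENNReal.toReal_pos hΦq₀ hΦq
  have hpow : (fun x ↦ ((Φ x).toReal ^ p / Ip.toReal) ^ (q / p)) =
      fun x ↦ (Φ x).toReal ^ q / Ip.toReal ^ (q / p) := by
    ext x
    rw [Real.div_rpow (by positivity) hIp.le, ← Real.rpow_mul ENNReal.toReal_nonneg,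
      mul_div_cancel₀ q hp.ne']
  have hlog : ENNReal.log (Iq ^ (p / q) / Ip) =
      ((p / q * Real.log Iq.toReal - Real.log Ip.toReal : ℝ) : EReal) := by
    rw [← Real.log_rpow hIq, ← Real.log_div (by positivity) hIp.ne', ENNReal.toReal_rpow,
      ← ENNReal.toReal_div, ENNReal.log_pos_real']
    rw [ENNReal.toReal_div, ← ENNReal.toReal_rpow]
    positivity
  refine (entropy_le_log_integral_rpow ((one_lt_div hp).2 hpq) (fun x ↦ by positivity)
    (by rw [integral_div, hp_int, div_self hIp.ne'])
    (hpow ▸ (integrable_toReal_rpow hΦ hΦq).div_const _)).trans_eq ?_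
  rw [hpow, integral_div, hq_int, Real.log_div hIq.ne' (by positivity), Real.log_rpow hIp, hlog,
    ← EReal.coe_mul]
  congr 1
  have := sub_ne_zero.2 hpq.ne'
  field_simp

end

lemma mul_le_rpow_mul_rpow {p p' : ℝ} (hpp : p.HolderConjugate p') {f v z : ℝ≥0∞}
    (hf : f ^ p * z ≠ ∞) (hv : v ^ p / z ≠ ∞) :
    f * v ≤ (f ^ p * z) ^ (1 / p) * ((v ^ p / z) ^ (1 / (p - 1))) ^ (1 / p') := by
  have hp : 0 < p := hpp.pos
  rcases eq_or_ne f 0 with rfl | hf₀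
  · simp
  rcases eq_or_ne v 0 with rfl | hv₀
  · simp
  have hz : z ≠ ∞ := by rintro rfl; simp [ENNReal.mul_top, hf₀, hp, hp.le] at hf
  have hz₀ : z ≠ 0 := by rintro rfl; simp [ENNReal.div_zero, hv₀, hp, hp.le] at hv
  have hexp : 1 / (p - 1) * (1 / p') = 1 / p := by
    rw [one_div_mul_one_div, hpp.sub_one_mul_conj]
  rw [← ENNReal.rpow_mul, hexp, ← ENNReal.mul_rpow_of_nonneg _ _ (by positivity), mul_assoc,
    ENNReal.mul_div_cancel hz₀ hz, ← ENNReal.mul_rpow_of_nonneg _ _ hp.le, ← ENNReal.rpow_mul,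
    mul_one_div_cancel hp.ne', ENNReal.rpow_one]

lemma le_mul_weight_rpow {q q' : ℝ} (hqq : q.HolderConjugate q') {g w V : ℝ≥0∞}
    (hw : w ^ (1 - q') ≠ ∞) (hV₀ : w ^ (1 - q') ≠ 0 → V ≠ 0) (hwg : w * g ^ q ≠ ∞) (hV : V ≠ ∞) :
    g ≤ (w * g ^ q * V ^ (1 / q')) ^ (1 / q) * (w ^ (1 - q') * V ^ (-(1 / q))) ^ (1 / q') := by
  rcases eq_or_ne g 0 with rfl | hg
  · exact zero_le
  have hq' : 0 < 1 / q' := hqq.symm.one_div_pos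
  have hexp : 1 / q' * -(1 / (q - 1)) = -(1 / q) := by
    rw [mul_neg, one_div_mul_one_div_rev, hqq.sub_one_mul_conj]
  have hexp' : -(1 / (q - 1)) = 1 - q' := by
    rw [hqq.conjugate_eq]; field_simp [hqq.sub_one_ne_zero]; ring
  have hw₀ : w ≠ 0 := by
    rintro rfl
    exact hw (ENNReal.zero_rpow_of_neg (by linarith [hqq.symm.lt]))
  have hw_top : w ≠ ∞ := by
    rintro rfl
    simp [ENNReal.top_mul, hg, hqq.pos, hqq.nonneg] at hwg
  have hV₀ : V ≠ 0 := hV₀ (by simp [ENNReal.rpow_eq_zero_iff, hw₀, hw_top])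
  have hVq : V ^ (1 / q') ≠ ∞ := ENNReal.rpow_ne_top_of_nonneg hq'.le hV
  have hVq₀ : V ^ (1 / q') ≠ 0 := by simp [ENNReal.rpow_eq_zero_iff, hV₀, hV]
  calc g = g * 1 := (mul_one g).symm
    _ ≤ (g ^ q * (w * V ^ (1 / q'))) ^ (1 / q) *
          ((1 ^ q / (w * V ^ (1 / q'))) ^ (1 / (q - 1))) ^ (1 / q') :=
        mul_le_rpow_mul_rpow hqq
          (by rw [mul_left_comm, ← mul_assoc]; exact ENNReal.mul_ne_top hwg hVq)
          (ENNReal.div_ne_top (by simp) (mul_ne_zero hw₀ hVq₀))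
    _ = _ := by
        rw [ENNReal.one_rpow, one_div (w * _), ENNReal.inv_rpow, ← ENNReal.rpow_neg,
          ENNReal.mul_rpow_of_ne_zero hw₀ hVq₀, ← ENNReal.rpow_mul, hexp, hexp',
          mul_left_comm, ← mul_assoc]

lemma rpow_sub_one_mul_eq_rpow {q q' : ℝ} (hqq : q.HolderConjugate q') (D : ℝ≥0∞) :
    (ENNReal.ofReal q' * D) ^ (q - 1) * (ENNReal.ofReal q * D) =
      (D * ENNReal.ofReal q' ^ (1 / q') * ENNReal.ofReal q ^ (1 / q)) ^ q := by
  have hq₁ : 0 ≤ q - 1 := hqq.sub_one_pos.le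
  have hD : D ^ (q - 1) * D = D ^ q := by
    conv_rhs => rw [← sub_add_cancel q 1, ENNReal.rpow_add_of_nonneg _ _ hq₁ zero_le_one,
      ENNReal.rpow_one]
  rw [ENNReal.mul_rpow_of_nonneg _ _ hqq.nonneg, ENNReal.mul_rpow_of_nonneg _ _ hqq.nonneg,
    ENNReal.mul_rpow_of_nonneg _ _ hq₁, ← ENNReal.rpow_mul, ← ENNReal.rpow_mul,
    one_div_mul_cancel hqq.ne_zero, one_div_mul_eq_div, hqq.div_conj_eq_sub_one,
    ENNReal.rpow_one, ← hD]
  ring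

section
variable {α : Type*} [MeasurableSpace α]

lemma measure_setOf_measure_lt_lt_le {μ : Measure α} {ρ : α → ℝ}
    (hρ : ∀ r, μ {x | ρ x = r} = 0) (c : ℝ≥0∞) :
    μ {x | μ {y | ρ y < ρ x} < c} ≤ c := by
  set S := {x | μ {y | ρ y < ρ x} < c}
  let T := ⋃ r : {r : ℚ // μ {y | ρ y < r} ≤ c}, {y | ρ y < r.1}
  have hT : μ T ≤ c := by
    have hmono : Monotone fun r : {r : ℚ // μ {y | ρ y < r} ≤ c} ↦ {y | ρ y < r.1} :=
      fun a b hab y (hy : ρ y < a.1) ↦ hy.trans_le (Rat.cast_le.2 hab)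
    rw [hmono.directed_le.measure_iUnion]
    exact iSup_le fun r ↦ r.2
  -- Two levels in `S` are separated by a rational, so `T` covers all of `S` but one level.
  have hle : ∀ x ∈ S, ∀ y ∈ S \ T, ρ x ≤ ρ y := by
    intro x hx y hy
    by_contra! hyx
    obtain ⟨r, hyr, hrx⟩ := exists_rat_btwn hyx
    have hr : μ {z | ρ z < r} ≤ c := (measure_mono fun z hz ↦ lt_trans hz hrx).trans hx.le
    exact hy.2 (Set.mem_iUnion_of_mem ⟨r, hr⟩ hyr)
  have hnull : μ (S \ T) = 0 := by
    rcases (S \ T).eq_empty_or_nonempty with h | ⟨x, hx⟩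
    · rw [h, measure_empty]
    · exact measure_mono_null (fun y hy ↦ (hle y hy.1 x hx).antisymm (hle x hx.1 y hy)) (hρ (ρ x))
  calc μ S ≤ μ (S ∩ T) + μ (S \ T) := measure_le_inter_add_sdiff μ S T
    _ ≤ μ T + μ (S \ T) := by gcongr; exact Set.inter_subset_right
    _ ≤ c := by rwa [hnull, add_zero]

lemma ae_ne_zero_of_measure_lt_le {μ : Measure α} {f : α → ℝ≥0∞}
    (hf : ∀ c, μ {x | f x < c} ≤ c) : ∀ᵐ x ∂μ, f x ≠ 0 := by
  rw [ae_iff, ← le_zero_iff]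
  refine le_of_forall_gt fun c hc ↦ ?_
  obtain ⟨b, hb0, hbc⟩ := exists_between hc
  refine (measure_mono fun x hx ↦ ?_).trans_lt ((hf b).trans_lt hbc)
  simpa [not_not.1 hx] using hb0

lemma measure_lt_toReal_rpow_neg_le {μ : Measure α} [IsFiniteMeasure μ] {f : α → ℝ≥0∞}
    (hf : ∀ c, μ {x | f x < c} ≤ c) {a t : ℝ} (ha : 0 < a) (ht : 0 < t) :
    μ {x | t < (f x ^ (-a)).toReal} ≤
      volume.restrict (Set.Ioc 0 (μ.real Set.univ)) {c : ℝ | t < c ^ (-a)} := by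
  have hsub : {x | t < (f x ^ (-a)).toReal} ⊆ {x | f x < ENNReal.ofReal (t ^ (-a)⁻¹)} := by
    intro x hx
    by_contra hfx
    have hfx : ENNReal.ofReal (t ^ (-a)⁻¹) ≤ f x := not_lt.1 hfx
    refine hx.not_ge (ENNReal.toReal_le_of_le_ofReal ht.le ?_)
    calc f x ^ (-a) ≤ ENNReal.ofReal (t ^ (-a)⁻¹) ^ (-a) := by
          rw [ENNReal.rpow_neg, ENNReal.rpow_neg]
          gcongr
      _ = ENNReal.ofReal t := by
          rw [ENNReal.ofReal_rpow_of_pos (by positivity),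
            Real.rpow_inv_rpow ht.le (neg_ne_zero.2 ha.ne')]
  calc μ {x | t < (f x ^ (-a)).toReal}
      ≤ min (μ Set.univ) (ENNReal.ofReal (t ^ (-a)⁻¹)) :=
        le_min (measure_mono (Set.subset_univ _)) ((measure_mono hsub).trans (hf _))
    _ = volume (Set.Ioo 0 (min (μ.real Set.univ) (t ^ (-a)⁻¹))) := by
        rw [Real.volume_Ioo, sub_zero, ENNReal.ofReal_min, ofReal_measureReal]
    _ ≤ volume ({c : ℝ | t < c ^ (-a)} ∩ Set.Ioc 0 (μ.real Set.univ)) := by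
        refine measure_mono fun c hc ↦ ⟨?_, hc.1, hc.2.le.trans (min_le_left _ _)⟩
        exact (Real.lt_rpow_inv_iff_of_neg hc.1 ht (neg_lt_zero.2 ha)).1
          (hc.2.trans_le (min_le_right _ _))
    _ ≤ _ := Measure.le_restrict_apply _ _

lemma lintegral_rpow_neg_le {μ : Measure α} {f : α → ℝ≥0∞} (hfm : Measurable f)
    (hf : ∀ c, μ {x | f x < c} ≤ c) {a : ℝ} (ha₀ : 0 < a) (ha₁ : a < 1) :
    ∫⁻ x, f x ^ (-a) ∂μ ≤ ENNReal.ofReal (1 / (1 - a)) * μ Set.univ ^ (1 - a) := by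
  rcases eq_or_ne (μ Set.univ) ∞ with hμ | hμ
  · simp [hμ, ENNReal.top_rpow_of_pos (sub_pos.2 ha₁), ENNReal.mul_top, ha₁]
  have : IsFiniteMeasure μ := ⟨hμ.lt_top⟩
  set M := μ.real Set.univ
  have hM₀ : 0 ≤ M := measureReal_nonneg
  calc ∫⁻ x, f x ^ (-a) ∂μ = ∫⁻ x, ENNReal.ofReal (f x ^ (-a)).toReal ∂μ := by
        refine lintegral_congr_ae ?_
        filter_upwards [ae_ne_zero_of_measure_lt_le hf] with x hx
        rw [ENNReal.ofReal_toReal (by simp [ENNReal.rpow_eq_top_iff, hx, ha₀.le])]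
    _ = ∫⁻ t in Set.Ioi 0, μ {x | t < (f x ^ (-a)).toReal} :=
        lintegral_eq_lintegral_meas_lt μ (.of_forall fun x ↦ ENNReal.toReal_nonneg)
          (hfm.pow_const _).ennreal_toReal.aemeasurable
    _ ≤ ∫⁻ t in Set.Ioi 0, volume.restrict (Set.Ioc 0 M) {c : ℝ | t < c ^ (-a)} :=
        setLIntegral_mono' measurableSet_Ioi fun t ht ↦ measure_lt_toReal_rpow_neg_le hf ha₀ ht
    _ = ∫⁻ c in Set.Ioc 0 M, ENNReal.ofReal (c ^ (-a)) := by
        refine (lintegral_eq_lintegral_meas_lt _ ?_ (by fun_prop)).symm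
        filter_upwards [ae_restrict_mem measurableSet_Ioc] with c hc
          using Real.rpow_nonneg hc.1.le _
    _ = ENNReal.ofReal (∫ c in 0..M, c ^ (-a)) := by
        rw [intervalIntegral.integral_of_le hM₀, ofReal_integral_eq_lintegral_ofReal]
        · exact (intervalIntegral.intervalIntegrable_rpow' (by linarith)).1
        · filter_upwards [ae_restrict_mem measurableSet_Ioc] with c hc
            using Real.rpow_nonneg hc.1.le _
    _ = ENNReal.ofReal (1 / (1 - a)) * μ Set.univ ^ (1 - a) := by
        rw [integral_rpow (.inl (by linarith)), neg_add_eq_sub,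
          Real.zero_rpow (by linarith), sub_zero, div_eq_mul_one_div, mul_comm,
          ENNReal.ofReal_mul (by simp [ha₁.le]),
          ← ENNReal.ofReal_rpow_of_nonneg hM₀ (by linarith), ofReal_measureReal]

lemma lintegral_mul_le_weighted_Lp_mul_Lq {μ : Measure α} {p p' : ℝ} (hpp : p.HolderConjugate p')
    {f v z : α → ℝ≥0∞} (hf : Measurable f) (hv : Measurable v) (hz : Measurable z)
    (hfz : ∫⁻ x, f x ^ p * z x ∂μ ≠ ∞)
    (hvz : ∫⁻ x, (v x ^ p / z x) ^ (1 / (p - 1)) ∂μ ≠ ∞) :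
    ∫⁻ x, f x * v x ∂μ ≤ (∫⁻ x, f x ^ p * z x ∂μ) ^ (1 / p) *
      (∫⁻ x, (v x ^ p / z x) ^ (1 / (p - 1)) ∂μ) ^ (1 / p') := by
  have hm₁ : Measurable fun x ↦ f x ^ p * z x := (hf.pow_const p).mul hz
  have hm₂ : Measurable fun x ↦ (v x ^ p / z x) ^ (1 / (p - 1)) :=
    ((hv.pow_const p).div hz).pow_const _
  have hp₁ : 0 < 1 / (p - 1) := one_div_pos.2 hpp.sub_one_pos
  refine (lintegral_mono_ae ?_).trans (ENNReal.lintegral_mul_norm_pow_le hm₁.aemeasurable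
    hm₂.aemeasurable hpp.one_div_nonneg hpp.symm.one_div_nonneg
    (by simpa using hpp.one_div_add_one_div))
  filter_upwards [ae_lt_top hm₁ hfz, ae_lt_top hm₂ hvz] with x hfx hvx
  refine mul_le_rpow_mul_rpow hpp hfx.ne fun h ↦ hvx.ne ?_
  rw [h, ENNReal.top_rpow_of_pos hp₁]

/-- The Hardy operator of a radius function `ρ`: the integral of `f` over the open sublevel set of
`ρ` through `x`, which is the ball `B(0, |x|)` when `ρ` is the norm. The operator of `-ρ`
integrates over the complementary region instead. -/
noncomputable def hardyOp (μ : Measure α) (ρ : α → ℝ) (f : α → ℝ≥0∞) (x : α) : ℝ≥0∞ :=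
  ∫⁻ y in {y | ρ y < ρ x}, f y ∂μ

variable {μ : Measure α} {ρ : α → ℝ} {f g : α → ℝ≥0∞}

lemma measure_setOf_neg_eq_zero (hρ₀ : ∀ r, μ {x | ρ x = r} = 0) (r : ℝ) :
    μ {x | (-ρ) x = r} = 0 := by
  simpa only [Pi.neg_apply, neg_eq_iff_eq_neg] using hρ₀ (-r)

lemma hardyOp_neg (x : α) : hardyOp μ (-ρ) f x = ∫⁻ y in {y | ρ x < ρ y}, f y ∂μ := by
  simp only [hardyOp, Pi.neg_apply, neg_lt_neg_iff]

lemma hardyOp_le_of_le {x y : α} (h : ρ x ≤ ρ y) : hardyOp μ ρ f x ≤ hardyOp μ ρ f y :=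
  lintegral_mono_set fun _ hz ↦ lt_of_lt_of_le hz h

lemma measurable_hardyOp (hρ : Measurable ρ) : Measurable (hardyOp μ ρ f) := by
  have hmono : Monotone fun r : ℝ ↦ ∫⁻ y in {y | ρ y < r}, f y ∂μ :=
    fun a b hab ↦ lintegral_mono_set fun y (hy : ρ y < a) ↦ hy.trans_le hab
  exact hmono.measurable.comp hρ

lemma hardyOp_eq_withDensity (hρ : Measurable ρ) (x : α) :
    hardyOp μ ρ f x = μ.withDensity f {y | ρ y < ρ x} :=
  (withDensity_apply _ (measurableSet_lt hρ measurable_const)).symm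

lemma withDensity_hardyOp_lt_le (hρ : Measurable ρ) (hρ₀ : ∀ r, μ {x | ρ x = r} = 0)
    (c : ℝ≥0∞) : μ.withDensity f {x | hardyOp μ ρ f x < c} ≤ c := by
  simp only [hardyOp_eq_withDensity hρ]
  exact measure_setOf_measure_lt_lt_le
    (fun r ↦ withDensity_absolutelyContinuous μ f (hρ₀ r)) c

lemma ae_hardyOp_ne_zero (hρ : Measurable ρ) (hρ₀ : ∀ r, μ {x | ρ x = r} = 0)
    (hf : Measurable f) : ∀ᵐ x ∂μ, f x ≠ 0 → hardyOp μ ρ f x ≠ 0 :=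
  (ae_withDensity_iff hf).1 (ae_ne_zero_of_measure_lt_le (withDensity_hardyOp_lt_le hρ hρ₀))

/- The substitution `t = V x` with `dt = f dμ` would turn the left-hand side into
`∫₀^{V y} t ^ (-a) dt`, where `V = hardyOp μ ρ f`. -/
lemma hardyOp_mul_rpow_neg_le (hρ : Measurable ρ) (hρ₀ : ∀ r, μ {x | ρ x = r} = 0)
    (hf : Measurable f) {a : ℝ} (ha₀ : 0 < a) (ha₁ : a < 1) (y : α) :
    hardyOp μ ρ (fun x ↦ f x * hardyOp μ ρ f x ^ (-a)) y ≤
      ENNReal.ofReal (1 / (1 - a)) * hardyOp μ ρ f y ^ (1 - a) := by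
  have hV : Measurable (hardyOp μ ρ f) := measurable_hardyOp hρ
  have hS : MeasurableSet {x | ρ x < ρ y} := measurableSet_lt hρ measurable_const
  have h := lintegral_rpow_neg_le (μ := (μ.withDensity f).restrict {x | ρ x < ρ y}) hV
    (fun c ↦ (Measure.restrict_apply_le _ _).trans (withDensity_hardyOp_lt_le hρ hρ₀ c)) ha₀ ha₁
  rwa [setLIntegral_withDensity_eq_setLIntegral_mul _ hf (hV.pow_const _) hS,
    Measure.restrict_apply_univ, ← hardyOp_eq_withDensity hρ] at h

lemma lintegral_mul_hardyOp [SFinite μ] (hρ : Measurable ρ) (hf : Measurable f)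
    (hg : Measurable g) :
    ∫⁻ y, f y * hardyOp μ ρ g y ∂μ = ∫⁻ x, g x * hardyOp μ (-ρ) f x ∂μ := by
  let k (y x : α) : ℝ≥0∞ := {z : α × α | ρ z.2 < ρ z.1}.indicator (fun z ↦ f z.1 * g z.2) (y, x)
  have hk : Measurable (Function.uncurry k) :=
    ((hf.comp measurable_fst).mul (hg.comp measurable_snd)).indicator
      (measurableSet_lt (hρ.comp measurable_snd) (hρ.comp measurable_fst))
  calc ∫⁻ y, f y * hardyOp μ ρ g y ∂μ = ∫⁻ y, ∫⁻ x, k y x ∂μ ∂μ := by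
        refine lintegral_congr fun y ↦ ?_
        rw [hardyOp, ← lintegral_const_mul _ hg,
          ← lintegral_indicator (measurableSet_lt hρ measurable_const)]
        rfl
    _ = ∫⁻ x, ∫⁻ y, k y x ∂μ ∂μ := lintegral_lintegral_swap hk.aemeasurable
    _ = ∫⁻ x, g x * hardyOp μ (-ρ) f x ∂μ := by
        refine lintegral_congr fun x ↦ ?_
        rw [hardyOp_neg, ← lintegral_const_mul _ hf,
          ← lintegral_indicator (measurableSet_lt measurable_const hρ)]
        refine lintegral_congr fun y ↦ ?_
        simp only [k, Set.indicator, Set.mem_ofPred_eq, mul_comm]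

/- Muckenhoupt's trick: Hölder's inequality after inserting `V ^ (1 / (q q'))` and its inverse,
where `V = hardyOp μ ρ (w ^ (1 - q'))`. -/
lemma hardyOp_rpow_le (hρ : Measurable ρ) (hρ₀ : ∀ r, μ {x | ρ x = r} = 0) {q q' : ℝ}
    (hqq : q.HolderConjugate q') {w : α → ℝ≥0∞} (hw : Measurable w) (hg : Measurable g)
    (hwg : ∀ᵐ x ∂μ, w x * g x ^ q ≠ ∞) {y : α}
    (hy : hardyOp μ ρ (fun x ↦ w x ^ (1 - q')) y ≠ ∞) :
    hardyOp μ ρ g y ^ q ≤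
      hardyOp μ ρ (fun x ↦ w x * g x ^ q * hardyOp μ ρ (fun x ↦ w x ^ (1 - q')) x ^ (1 / q')) y *
        (ENNReal.ofReal q' * hardyOp μ ρ (fun x ↦ w x ^ (1 - q')) y ^ (1 / q')) ^ (q - 1) := by
  have hq : 0 < q := hqq.pos
  have hq' : 0 ≤ 1 / q' := hqq.symm.one_div_nonneg
  have hexp : 1 - 1 / q = 1 / q' := by simpa using hqq.one_sub_inv
  have hadd : 1 / q + 1 / q' = 1 := by simpa using hqq.inv_add_inv_eq_one
  set σ : α → ℝ≥0∞ := fun x ↦ w x ^ (1 - q')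
  set V := hardyOp μ ρ σ
  have hσm : Measurable σ := hw.pow_const _
  have hVm : Measurable V := measurable_hardyOp hρ
  have hpt : ∀ᵐ x ∂μ.restrict {x | ρ x < ρ y},
      g x ≤ (w x * g x ^ q * V x ^ (1 / q')) ^ (1 / q) * (σ x * V x ^ (-(1 / q))) ^ (1 / q') := by
    filter_upwards [ae_lt_top hσm hy, ae_restrict_of_ae (ae_hardyOp_ne_zero hρ hρ₀ hσm),
      ae_restrict_of_ae hwg, ae_restrict_mem (measurableSet_lt hρ measurable_const)]
      with x hσx hVx hwgx hxy
    exact le_mul_weight_rpow hqq hσx.ne hVx hwgx (ne_top_of_le_ne_top hy (hardyOp_le_of_le hxy.le))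
  have hHolder : hardyOp μ ρ g y ≤ hardyOp μ ρ (fun x ↦ w x * g x ^ q * V x ^ (1 / q')) y ^ (1 / q)
      * (ENNReal.ofReal q' * V y ^ (1 / q')) ^ (1 / q') := by
    refine ((lintegral_mono_ae hpt).trans (ENNReal.lintegral_mul_norm_pow_le (by fun_prop)
      (by fun_prop) hqq.one_div_nonneg hq' hadd)).trans (mul_le_mul_right ?_ _)
    have h := hardyOp_mul_rpow_neg_le hρ hρ₀ hσm hqq.one_div_pos
      (by linarith [hqq.symm.one_div_pos]) y
    rw [hexp, one_div_one_div] at h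
    exact ENNReal.rpow_le_rpow h hq'
  calc hardyOp μ ρ g y ^ q ≤ _ := ENNReal.rpow_le_rpow hHolder hq.le
    _ = _ := by
      rw [ENNReal.mul_rpow_of_nonneg _ _ hq.le, ← ENNReal.rpow_mul, ← ENNReal.rpow_mul,
        one_div_mul_cancel hq.ne', ENNReal.rpow_one, one_div_mul_eq_div, hqq.div_conj_eq_sub_one]

lemma mul_hardyOp_rpow_le (hρ : Measurable ρ) (hρ₀ : ∀ r, μ {x | ρ x = r} = 0) {q q' : ℝ}
    (hqq : q.HolderConjugate q') {w : α → ℝ≥0∞} (hw : Measurable w) (hg : Measurable g)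
    (hwg : ∀ᵐ x ∂μ, w x * g x ^ q ≠ ∞) {D T : ℝ≥0∞} (hD : D ≠ ∞) (hT : T ≠ 0) {y : α}
    (hTV : T ^ (1 / q) * hardyOp μ ρ (fun x ↦ w x ^ (1 - q')) y ^ (1 / q') ≤ D) :
    hardyOp μ ρ g y ^ q ≤ (ENNReal.ofReal q' * D) ^ (q - 1) * (T ^ (-(1 / q')) *
      hardyOp μ ρ
        (fun x ↦ w x * g x ^ q * hardyOp μ ρ (fun x ↦ w x ^ (1 - q')) x ^ (1 / q')) y) := by
  set V := hardyOp μ ρ fun x ↦ w x ^ (1 - q')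
  have hTq : T ^ (1 / q) ≠ 0 := by simp [ENNReal.rpow_eq_zero_iff, hT, hqq.nonneg]
  have hV : V y ^ (1 / q') ≤ D * T ^ (-(1 / q)) := by
    rw [ENNReal.rpow_neg, ← div_eq_mul_inv]
    exact (ENNReal.le_div_iff_mul_le (.inl hTq) (.inr hD)).2 ((mul_comm _ _).trans_le hTV)
  have hVy : V y ≠ ∞ := by
    intro h
    rw [h, ENNReal.top_rpow_of_pos hqq.symm.one_div_pos, ENNReal.mul_top hTq] at hTV
    exact hD (top_le_iff.1 hTV)
  calc hardyOp μ ρ g y ^ q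
      ≤ hardyOp μ ρ (fun x ↦ w x * g x ^ q * V x ^ (1 / q')) y *
          (ENNReal.ofReal q' * V y ^ (1 / q')) ^ (q - 1) :=
        hardyOp_rpow_le hρ hρ₀ hqq hw hg hwg hVy
    _ ≤ hardyOp μ ρ (fun x ↦ w x * g x ^ q * V x ^ (1 / q')) y *
          (ENNReal.ofReal q' * D * T ^ (-(1 / q))) ^ (q - 1) := by
        rw [mul_assoc _ D]
        gcongr
        exact hqq.sub_one_pos.le
    _ = _ := by
        have hexp : -(1 / q) * (q - 1) = -(1 / q') := by
          rw [neg_mul, one_div_mul_eq_div, sub_div, div_self hqq.ne_zero, one_div, one_div,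
            hqq.one_sub_inv]
        rw [ENNReal.mul_rpow_of_nonneg _ _ hqq.sub_one_pos.le, ← ENNReal.rpow_mul, hexp,
          mul_comm, mul_assoc]

lemma lintegral_mul_rpow_neg_hardyOp_le [SFinite μ] (hρ : Measurable ρ)
    (hρ₀ : ∀ r, μ {x | ρ x = r} = 0) {q q' : ℝ} (hqq : q.HolderConjugate q')
    {U V : α → ℝ≥0∞} (hU : Measurable U) (hV : Measurable V) (hf : Measurable f) {D : ℝ≥0∞}
    (hUV : ∀ᵐ x ∂μ, hardyOp μ (-ρ) U x ^ (1 / q) * V x ^ (1 / q') ≤ D) :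
    ∫⁻ y, U y * hardyOp μ (-ρ) U y ^ (-(1 / q')) * hardyOp μ ρ (fun x ↦ f x * V x ^ (1 / q')) y ∂μ
      ≤ ENNReal.ofReal q * D * ∫⁻ x, f x ∂μ := by
  have hρ₀_neg := measure_setOf_neg_eq_zero hρ₀
  set T := hardyOp μ (-ρ) U
  have hUT : Measurable fun y ↦ U y * T y ^ (-(1 / q')) :=
    hU.mul ((measurable_hardyOp hρ.neg).pow_const _)
  have htail (x : α) : hardyOp μ (-ρ) (fun y ↦ U y * T y ^ (-(1 / q'))) x ≤
      ENNReal.ofReal q * T x ^ (1 / q) := by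
    have hexp : 1 - 1 / q' = 1 / q := by simpa using hqq.symm.one_sub_inv
    have h := hardyOp_mul_rpow_neg_le hρ.neg hρ₀_neg hU hqq.symm.one_div_pos
      (by linarith [hqq.one_div_pos]) x
    rwa [hexp, one_div_one_div] at h
  have hfV : Measurable fun x ↦ f x * V x ^ (1 / q') := hf.mul (hV.pow_const _)
  rw [lintegral_mul_hardyOp hρ hUT hfV, ← lintegral_const_mul _ hf]
  refine lintegral_mono_ae (hUV.mono fun x hx ↦ ?_)
  calc f x * V x ^ (1 / q') * hardyOp μ (-ρ) (fun y ↦ U y * T y ^ (-(1 / q'))) x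
      ≤ f x * V x ^ (1 / q') * (ENNReal.ofReal q * T x ^ (1 / q)) := by gcongr; exact htail x
    _ = ENNReal.ofReal q * (T x ^ (1 / q) * V x ^ (1 / q')) * f x := by ring
    _ ≤ ENNReal.ofReal q * D * f x := by gcongr

theorem lintegral_mul_hardyOp_rpow_le [SFinite μ] (hρ : Measurable ρ)
    (hρ₀ : ∀ r, μ {x | ρ x = r} = 0) {q q' : ℝ} (hqq : q.HolderConjugate q') {U w : α → ℝ≥0∞}
    (hU : Measurable U) (hw : Measurable w) (hg : Measurable g) {D : ℝ≥0∞} (hD : D ≠ ∞)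
    (hUw : ∀ᵐ x ∂μ, hardyOp μ (-ρ) U x ^ (1 / q) *
      hardyOp μ ρ (fun y ↦ w y ^ (1 - q')) x ^ (1 / q') ≤ D)
    (hwg : ∫⁻ x, w x * g x ^ q ∂μ ≠ ∞) :
    ∫⁻ y, U y * hardyOp μ ρ g y ^ q ∂μ ≤
      (D * ENNReal.ofReal q' ^ (1 / q') * ENNReal.ofReal q ^ (1 / q)) ^ q *
        ∫⁻ x, w x * g x ^ q ∂μ := by
  have hρ₀_neg := measure_setOf_neg_eq_zero hρ₀
  have hq₁ : 0 ≤ q - 1 := hqq.sub_one_pos.le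
  have hwgm : Measurable fun x ↦ w x * g x ^ q := hw.mul (hg.pow_const q)
  set T := hardyOp μ (-ρ) U
  set V := hardyOp μ ρ fun y ↦ w y ^ (1 - q')
  have hVm : Measurable V := measurable_hardyOp hρ
  set G : α → ℝ≥0∞ := fun x ↦ w x * g x ^ q * V x ^ (1 / q')
  have hpt : ∀ᵐ y ∂μ, U y * hardyOp μ ρ g y ^ q ≤
      (ENNReal.ofReal q' * D) ^ (q - 1) * (U y * T y ^ (-(1 / q')) * hardyOp μ ρ G y) := by
    filter_upwards [ae_hardyOp_ne_zero hρ.neg hρ₀_neg hU, hUw] with y hTy hy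
    rcases eq_or_ne (U y) 0 with h | h
    · simp [h]
    · rw [mul_assoc (U y), mul_left_comm _ (U y)]
      gcongr
      exact mul_hardyOp_rpow_le hρ hρ₀ hqq hw hg
        ((ae_lt_top hwgm hwg).mono fun _ ↦ LT.lt.ne) hD (hTy h) hy
  calc ∫⁻ y, U y * hardyOp μ ρ g y ^ q ∂μ
      ≤ (ENNReal.ofReal q' * D) ^ (q - 1) *
          ∫⁻ y, U y * T y ^ (-(1 / q')) * hardyOp μ ρ G y ∂μ := by
        refine (lintegral_mono_ae hpt).trans_eq (lintegral_const_mul' _ _ ?_)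
        exact ENNReal.rpow_ne_top_of_nonneg hq₁ (ENNReal.mul_ne_top ENNReal.ofReal_ne_top hD)
    _ ≤ (ENNReal.ofReal q' * D) ^ (q - 1) * (ENNReal.ofReal q * D * ∫⁻ x, w x * g x ^ q ∂μ) := by
        gcongr
        exact lintegral_mul_rpow_neg_hardyOp_le hρ hρ₀ hqq hU hVm hwgm hUw
    _ = _ := by rw [← mul_assoc, rpow_sub_one_mul_eq_rpow hqq]

end

/-- The weight dual to `z` in Hölder's inequality between `∫ f v` and `∫ f ^ p z`; it is the
integrand in the definition of `A`. -/
noncomputable def dualWeight {E : Type*} (p : ℝ) (v z : E → ℝ≥0∞) (x : E) : ℝ≥0∞ :=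
  (v x ^ p / z x) ^ (1 / (p - 1))

/-- The weight `A` of the inequality, with `hardyOp μ norm v x` in the role of `C(|x|)`. -/
noncomputable def hardyWeight {E : Type*} [NormedAddCommGroup E] [MeasurableSpace E]
    (μ : Measure E) (p p' q : ℝ) (v z : E → ℝ≥0∞) (x : E) : ℝ≥0∞ :=
  ((μ (ball 0 ‖x‖))⁻¹ * hardyOp μ norm (dualWeight p v z) x) ^ (-(q / p')) *
    (hardyOp μ norm v x / μ (ball 0 ‖x‖)) ^ q * v x

/-- The common form of the two weights in the constant `D₁`: the weight `A` divided by
`h ^ q |x| ^ (s q)`, for `h` equal to `C(|x|)` or to `v`. -/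
noncomputable def weightRatio {E : Type*} [NormedAddCommGroup E] (q s : ℝ) (A h : E → ℝ≥0∞)
    (x : E) : ℝ≥0∞ :=
  A x / (h x ^ q * ‖x‖ₑ ^ (s * q))

/-- The Muckenhoupt constant of a pair of weights `(U, w)` in `L ^ q`, over complements of balls and
balls centered at the origin; it is `D₁` for the pair of weights given by `weightRatio`. -/
noncomputable def muckenhouptConst {E : Type*} [NormedAddCommGroup E] [MeasurableSpace E]
    (μ : Measure E) (q q' : ℝ) (U w : E → ℝ≥0∞) : ℝ≥0∞ :=
  ⨆ x : {x : E // x ≠ 0}, (∫⁻ y in (ball 0 ‖x.1‖)ᶜ, U y ∂μ) ^ (1 / q) *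
    (∫⁻ y in ball 0 ‖x.1‖, w y ^ (1 - q') ∂μ) ^ (1 / q')

/-- The constant `D₁ (q')^{1/q'} q^{1/q}`, a bound for the norm of the Hardy operator between the
weighted `L ^ q` spaces attached to `A`. -/
noncomputable def hardyConst {E : Type*} [NormedAddCommGroup E] [MeasurableSpace E]
    (μ : Measure E) (q q' s : ℝ) (A v : E → ℝ≥0∞) : ℝ≥0∞ :=
  muckenhouptConst μ q q' (weightRatio q s A (hardyOp μ norm v)) (weightRatio q s A v) *
    ENNReal.ofReal q' ^ (1 / q') * ENNReal.ofReal q ^ (1 / q)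

/-- The function `Φ = A^{1/q} |u| / |x|^s` whose entropy the inequality estimates. -/
noncomputable def weightedProfile {E F : Type*} [NormedAddCommGroup E] [NormedAddCommGroup F]
    (q s : ℝ) (A : E → ℝ≥0∞) (u : E → F) (x : E) : ℝ≥0∞ :=
  A x ^ (1 / q) * ‖u x‖ₑ / ‖x‖ₑ ^ s

/-- The density at `y` of the fractional energy of `u`: the `z`-weighted Gagliardo integral in the
remaining variable. -/
noncomputable def gagliardoDensity {E F : Type*} [NormedAddCommGroup E] [NormedSpace ℝ E]
    [MeasurableSpace E] [NormedAddCommGroup F] (μ : Measure E) (p s : ℝ) (z : E → ℝ≥0∞)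
    (u : E → F) (y : E) : ℝ≥0∞ :=
  ∫⁻ x, ‖u x - u y‖ₑ ^ p / ‖x - y‖ₑ ^ (Module.finrank ℝ E + s * p) * z x ∂μ

lemma le_div_one_sub_of_le_add_mul {a b κ : ℝ≥0∞} (ha : a ≠ ∞) (hκ : κ < 1)
    (h : a ≤ b + κ * a) : a ≤ b / (1 - κ) := by
  rw [ENNReal.le_div_iff_mul_le (.inl (tsub_pos_of_lt hκ).ne') (.inl (by simp)), mul_comm,
    ENNReal.sub_mul fun _ _ ↦ ha, one_mul]
  exact tsub_le_iff_right.2 h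

lemma lintegral_const_mul_rpow_rpow {α : Type*} [MeasurableSpace α] {μ : Measure α} {q : ℝ}
    (hq : 0 < q) {f : α → ℝ≥0∞} (hf : Measurable f) (c : ℝ≥0∞) :
    (∫⁻ x, (c * f x) ^ q ∂μ) ^ (1 / q) = c * (∫⁻ x, f x ^ q ∂μ) ^ (1 / q) := by
  simp only [ENNReal.mul_rpow_of_nonneg _ _ hq.le]
  rw [lintegral_const_mul _ (hf.pow_const q), ENNReal.mul_rpow_of_nonneg _ _ (by positivity),
    ← ENNReal.rpow_mul, mul_one_div_cancel hq.ne', ENNReal.rpow_one]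

lemma enorm_mul_hardyOp_le {α F : Type*} [MeasurableSpace α] [NormedAddCommGroup F]
    {μ : Measure α} {ρ : α → ℝ} {v : α → ℝ≥0∞} {u : α → F} (hv : Measurable v)
    (hu : StronglyMeasurable u) (y : α) :
    ‖u y‖ₑ * hardyOp μ ρ v y ≤
      hardyOp μ ρ (fun x ↦ ‖u x - u y‖ₑ * v x) y + hardyOp μ ρ (fun x ↦ ‖u x‖ₑ * v x) y := by
  have huv : Measurable fun x ↦ ‖u x‖ₑ * v x := hu.enorm.mul hv
  simp only [hardyOp]
  rw [← lintegral_const_mul _ hv, ← lintegral_add_right _ huv]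
  refine lintegral_mono fun x ↦ ?_
  rw [← add_mul]
  gcongr
  calc ‖u y‖ₑ = ‖u x - (u x - u y)‖ₑ := by rw [_root_.sub_sub_cancel]
    _ ≤ ‖u x - u y‖ₑ + ‖u x‖ₑ := enorm_sub_le.trans_eq (add_comm _ _)

lemma inv_mul_rpow_neg_mul_inv_mul_rpow {p p' : ℝ} (hpp : p.HolderConjugate p') {β M : ℝ≥0∞}
    (hβ₀ : β ≠ 0) (hβ : β ≠ ∞) (hM₀ : M ≠ 0) (hM : M ≠ ∞) :
    (β⁻¹ * M) ^ (-(1 / p')) * β⁻¹ * M ^ (1 / p') = β ^ (-(1 / p)) := by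
  have hexp : 1 / p' - 1 = -(1 / p) := by
    linarith [show 1 / p + 1 / p' = 1 by simpa using hpp.inv_add_inv_eq_one]
  calc (β⁻¹ * M) ^ (-(1 / p')) * β⁻¹ * M ^ (1 / p')
      = β ^ (1 / p') * β ^ (-1 : ℝ) * (M ^ (-(1 / p')) * M ^ (1 / p')) := by
        rw [ENNReal.mul_rpow_of_ne_zero (ENNReal.inv_ne_zero.2 hβ) hM₀, ENNReal.rpow_neg β⁻¹,
          ENNReal.inv_rpow, inv_inv, ENNReal.rpow_neg_one]
        ring
    _ = β ^ (-(1 / p)) := by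
        rw [← ENNReal.rpow_add _ _ hβ₀ hβ, ← ENNReal.rpow_add _ _ hM₀ hM, neg_add_cancel,
          ENNReal.rpow_zero, mul_one, ← sub_eq_add_neg, hexp]

lemma rpow_mul_rpow_neg_mul_inv_mul_two_mul_rpow {p d s : ℝ} (hp : 0 < p) (hd : 0 ≤ d + s * p)
    {r ω : ℝ≥0∞} (hr₀ : r ≠ 0) (hr : r ≠ ∞) (hω₀ : ω ≠ 0) :
    (r ^ d * ω) ^ (-(1 / p)) * (r ^ s)⁻¹ * ((2 * r) ^ (d + s * p)) ^ (1 / p) =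
      (2 ^ (d + s * p) / ω) ^ (1 / p) := by
  have hrd : r ^ d ≠ 0 := by simp [ENNReal.rpow_eq_zero_iff, hr₀, hr]
  have hexp : d * -(1 / p) + -s + (d + s * p) * (1 / p) = 0 := by field_simp; ring
  calc (r ^ d * ω) ^ (-(1 / p)) * (r ^ s)⁻¹ * ((2 * r) ^ (d + s * p)) ^ (1 / p)
      = (2 ^ (d + s * p)) ^ (1 / p) * (ω ^ (1 / p))⁻¹ *
          (r ^ (d * -(1 / p)) * r ^ (-s) * r ^ ((d + s * p) * (1 / p))) := by
        rw [ENNReal.mul_rpow_of_ne_zero hrd hω₀, ENNReal.mul_rpow_of_nonneg _ _ hd,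
          ENNReal.mul_rpow_of_nonneg _ _ (by positivity), ENNReal.rpow_neg r s,
          ENNReal.rpow_neg ω, ENNReal.rpow_mul r, ENNReal.rpow_mul r]
        ring
    _ = (2 ^ (d + s * p) / ω) ^ (1 / p) := by
        rw [← ENNReal.rpow_add _ _ hr₀ hr, ← ENNReal.rpow_add _ _ hr₀ hr,
          ENNReal.div_rpow_of_nonneg _ _ (by positivity), hexp, ENNReal.rpow_zero, mul_one,
          ← div_eq_mul_inv]

section
variable {E F : Type*} [NormedAddCommGroup E] [NormedAddCommGroup F]

lemma enorm_rpow_ne_zero {x : E} (hx : x ≠ 0) (a : ℝ) : ‖x‖ₑ ^ a ≠ 0 := by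
  simp [ENNReal.rpow_eq_zero_iff, hx]

lemma enorm_rpow_ne_top {x : E} (hx : x ≠ 0) (a : ℝ) : ‖x‖ₑ ^ a ≠ ∞ := by
  simp [ENNReal.rpow_eq_top_iff, hx]

lemma weightRatio_rpow {q s : ℝ} (hq : 0 < q) (A h : E → ℝ≥0∞) (x : E) :
    weightRatio q s A h x ^ (1 / q) = A x ^ (1 / q) / (h x * ‖x‖ₑ ^ s) := by
  have hq' : 0 ≤ 1 / q := by positivity
  rw [weightRatio, ENNReal.rpow_mul, ← ENNReal.mul_rpow_of_nonneg _ _ hq.le,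
    ENNReal.div_rpow_of_nonneg _ _ hq', ← ENNReal.rpow_mul, mul_one_div_cancel hq.ne',
    ENNReal.rpow_one]

lemma weightRatio_mul_rpow_le {q s : ℝ} (hq : 0 < q) (A v : E → ℝ≥0∞) (u : E → F) {x : E}
    (hx : x ≠ 0) :
    weightRatio q s A v x * (‖u x‖ₑ * v x) ^ q ≤ weightedProfile q s A u x ^ q := by
  calc weightRatio q s A v x * (‖u x‖ₑ * v x) ^ q
      = A x * ‖u x‖ₑ ^ q * (‖x‖ₑ ^ (s * q))⁻¹ * (v x ^ q / v x ^ q) := by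
        rw [weightRatio, div_eq_mul_inv, ENNReal.mul_inv (.inr (enorm_rpow_ne_top hx _))
          (.inr (enorm_rpow_ne_zero hx _)), ENNReal.mul_rpow_of_nonneg _ _ hq.le, div_eq_mul_inv]
        ring
    _ ≤ A x * ‖u x‖ₑ ^ q * (‖x‖ₑ ^ (s * q))⁻¹ := mul_le_of_le_one_right' ENNReal.div_self_le_one
    _ = weightedProfile q s A u x ^ q := by
        rw [weightedProfile, ENNReal.div_rpow_of_nonneg _ _ hq.le,
          ENNReal.mul_rpow_of_nonneg _ _ hq.le, ← ENNReal.rpow_mul, ← ENNReal.rpow_mul,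
          one_div_mul_cancel hq.ne', ENNReal.rpow_one, div_eq_mul_inv]

variable [MeasurableSpace E] {μ : Measure E} {v : E → ℝ≥0∞} {u : E → F}

lemma hardyOp_norm (f : E → ℝ≥0∞) (x : E) :
    hardyOp μ norm f x = ∫⁻ y in ball 0 ‖x‖, f y ∂μ := by
  simp only [hardyOp, ball, dist_zero_right]

lemma hardyOp_mul_hardyOp_le_muckenhouptConst {q q' : ℝ} (hq : 0 ≤ 1 / q) (U w : E → ℝ≥0∞)
    {x : E} (hx : x ≠ 0) :
    hardyOp μ (-norm) U x ^ (1 / q) * hardyOp μ norm (fun y ↦ w y ^ (1 - q')) x ^ (1 / q') ≤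
      muckenhouptConst μ q q' U w := by
  rw [hardyOp_norm, hardyOp_neg]
  refine le_iSup_of_le (⟨x, hx⟩ : {x : E // x ≠ 0}) ?_
  gcongr
  intro y hy
  simpa using le_of_lt hy

lemma hardyConst_lt_one {q q' s D : ℝ} (hqq : q.HolderConjugate q') {A v : E → ℝ≥0∞}
    (hD : muckenhouptConst μ q q' (weightRatio q s A (hardyOp μ norm v)) (weightRatio q s A v) =
      ENNReal.ofReal D)
    (hsmall : D * q' ^ (1 / q') * q ^ (1 / q) < 1) : hardyConst μ q q' s A v < 1 := by
  rw [hardyConst, hD, ENNReal.ofReal_rpow_of_nonneg hqq.symm.nonneg hqq.symm.one_div_nonneg,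
    ENNReal.ofReal_rpow_of_nonneg hqq.nonneg hqq.one_div_nonneg,
    ← ENNReal.ofReal_mul' (Real.rpow_nonneg hqq.symm.nonneg _),
    ← ENNReal.ofReal_mul' (Real.rpow_nonneg hqq.nonneg _)]
  exact ENNReal.ofReal_lt_one.2 hsmall

lemma hardyWeight_rpow {p p' q : ℝ} (hq : 0 < q) (v z : E → ℝ≥0∞) (x : E) :
    hardyWeight μ p p' q v z x ^ (1 / q) =
      ((μ (ball 0 ‖x‖))⁻¹ * hardyOp μ norm (dualWeight p v z) x) ^ (-(1 / p'))
        * (hardyOp μ norm v x / μ (ball 0 ‖x‖)) * v x ^ (1 / q) := by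
  have hq' : 0 ≤ 1 / q := by positivity
  have hexp : -(q / p') * (1 / q) = -(1 / p') := by field_simp
  rw [hardyWeight, ENNReal.mul_rpow_of_nonneg _ _ hq', ENNReal.mul_rpow_of_nonneg _ _ hq',
    ← ENNReal.rpow_mul, ← ENNReal.rpow_mul, hexp, mul_one_div_cancel hq.ne', ENNReal.rpow_one]

lemma weightRatio_hardyWeight_rpow {p p' q s : ℝ} (hq : 0 < q) {z : E → ℝ≥0∞} {y : E}
    (hK₀ : hardyOp μ norm v y ≠ 0) (hK : hardyOp μ norm v y ≠ ∞) :
    weightRatio q s (hardyWeight μ p p' q v z) (hardyOp μ norm v) y ^ (1 / q) =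
      ((μ (ball 0 ‖y‖))⁻¹ * hardyOp μ norm (dualWeight p v z) y) ^ (-(1 / p')) *
        (μ (ball 0 ‖y‖))⁻¹ * (‖y‖ₑ ^ s)⁻¹ * v y ^ (1 / q) := by
  rw [weightRatio_rpow hq, hardyWeight_rpow hq]
  set X := ((μ (ball 0 ‖y‖))⁻¹ * hardyOp μ norm (dualWeight p v z) y) ^ (-(1 / p'))
  calc X * (hardyOp μ norm v y / μ (ball 0 ‖y‖)) * v y ^ (1 / q) / (hardyOp μ norm v y * ‖y‖ₑ ^ s)
      = hardyOp μ norm v y * (X * (μ (ball 0 ‖y‖))⁻¹ * v y ^ (1 / q)) /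
          (hardyOp μ norm v y * ‖y‖ₑ ^ s) := by
        congr 1
        rw [div_eq_mul_inv]
        ring
    _ = X * (μ (ball 0 ‖y‖))⁻¹ * v y ^ (1 / q) / ‖y‖ₑ ^ s :=
        ENNReal.mul_div_mul_left _ _ hK₀ hK
    _ = _ := by
        rw [div_eq_mul_inv, mul_right_comm]

lemma hardyWeight_nondegenerate {p p' q : ℝ} (hp' : 0 < p') (hq : 0 < q) {v z : E → ℝ≥0∞} {x : E}
    (hA₀ : hardyWeight μ p p' q v z x ≠ 0) (hA : hardyWeight μ p p' q v z x ≠ ∞)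
    (hβ : μ (ball 0 ‖x‖) ≠ ∞) :
    v x ≠ 0 ∧ (hardyOp μ norm v x ≠ 0 ∧ hardyOp μ norm v x ≠ ∞) ∧
      hardyOp μ norm (dualWeight p v z) x ≠ 0 ∧
      hardyOp μ norm (dualWeight p v z) x ≠ ∞ := by
  unfold hardyWeight at hA₀ hA
  set M := hardyOp μ norm (dualWeight p v z) x
  set K := hardyOp μ norm v x
  have he : 0 < q / p' := div_pos hq hp'
  obtain ⟨hMK₀, hv₀⟩ := mul_ne_zero_iff.1 hA₀
  obtain ⟨hM₀, hK₀⟩ := mul_ne_zero_iff.1 hMK₀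
  have hMK := (ENNReal.lt_top_of_mul_ne_top_left hA hv₀).ne
  have hM := (ENNReal.lt_top_of_mul_ne_top_left hMK hK₀).ne
  have hK := (ENNReal.lt_top_of_mul_ne_top_right hMK hM₀).ne
  refine ⟨hv₀, ⟨?_, ?_⟩, ?_, ?_⟩
  · rintro h
    simp [h, hq] at hK₀
  · intro h
    simp [h, ENNReal.top_div, hβ, hq] at hK
  · intro h
    simp [h, he] at hM
  · intro h
    simp [h, ENNReal.mul_top, hβ, he] at hM₀

variable [BorelSpace E] {z : E → ℝ≥0∞}

lemma measurable_hardyWeight {p p' q : ℝ} (hv : Measurable v) :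
    Measurable (hardyWeight μ p p' q v z) := by
  have hβ : Measurable fun x : E ↦ μ (ball 0 ‖x‖) := by
    have h := measurable_hardyOp (μ := μ) (f := 1) (measurable_norm (α := E))
    rw [show hardyOp μ norm 1 = fun x : E ↦ μ (ball 0 ‖x‖) from
      funext fun x ↦ (hardyOp_norm 1 x).trans (setLIntegral_one _)] at h
    exact h
  have hM := measurable_hardyOp (μ := μ) (f := dualWeight p v z) (measurable_norm (α := E))
  have hK := measurable_hardyOp (μ := μ) (f := v) (measurable_norm (α := E))
  exact (((hβ.inv.mul hM).pow_const _).mul ((hK.div hβ).pow_const q)).mul hv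

lemma measurable_weightRatio {q s : ℝ} {A h : E → ℝ≥0∞} (hA : Measurable A) (hh : Measurable h) :
    Measurable (weightRatio q s A h) := by
  unfold weightRatio
  fun_prop

lemma measurable_weightedProfile {q s : ℝ} {A : E → ℝ≥0∞} (hA : Measurable A)
    (hu : StronglyMeasurable u) : Measurable (weightedProfile q s A u) :=
  ((hA.pow_const _).mul hu.enorm).div (measurable_enorm.pow_const _)

variable [NormedSpace ℝ E]

lemma measurable_gagliardoDensity [SecondCountableTopology E] [SFinite μ] {p s : ℝ}
    (hu : StronglyMeasurable u) (hz : Measurable z) :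
    Measurable (gagliardoDensity μ p s z u) := by
  have hdiff : Measurable fun a : E × E ↦ ‖u a.2 - u a.1‖ₑ :=
    ((hu.comp_measurable measurable_snd).sub (hu.comp_measurable measurable_fst)).enorm
  have hdist : Measurable fun a : E × E ↦ ‖a.2 - a.1‖ₑ := by fun_prop
  exact Measurable.lintegral_prod_right' (f := fun a : E × E ↦ ‖u a.2 - u a.1‖ₑ ^ p /
    ‖a.2 - a.1‖ₑ ^ (Module.finrank ℝ E + s * p) * z a.2)
    (((hdiff.pow_const p).div (hdist.pow_const _)).mul (hz.comp measurable_snd))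

lemma hardyOp_enorm_sub_rpow_mul_le {p s : ℝ} (hp : 0 < p)
    (hs : 0 ≤ Module.finrank ℝ E + s * p) (y : E) :
    hardyOp μ norm (fun x ↦ ‖u x - u y‖ₑ ^ p * z x) y ≤
      (2 * ‖y‖ₑ) ^ (Module.finrank ℝ E + s * p) * gagliardoDensity μ p s z u y := by
  set a := Module.finrank ℝ E + s * p
  have hbound : ∀ x, ‖x‖ < ‖y‖ → ‖u x - u y‖ₑ ^ p * z x ≤
      (2 * ‖y‖ₑ) ^ a * (‖u x - u y‖ₑ ^ p / ‖x - y‖ₑ ^ a * z x) := by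
    intro x hx
    rcases eq_or_ne x y with rfl | hxy
    · simp [hp]
    have hxy : ‖x - y‖ₑ ≠ 0 := by simpa [sub_eq_zero] using hxy
    calc ‖u x - u y‖ₑ ^ p * z x
        = ‖x - y‖ₑ ^ a * (‖u x - u y‖ₑ ^ p / ‖x - y‖ₑ ^ a * z x) := by
          rw [← mul_assoc, ENNReal.mul_div_cancel]
          · simp [ENNReal.rpow_eq_zero_iff, hxy]
          · exact ENNReal.rpow_ne_top_of_nonneg hs enorm_ne_top
      _ ≤ _ := by
          gcongr
          calc ‖x - y‖ₑ ≤ ‖x‖ₑ + ‖y‖ₑ := enorm_sub_le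
            _ ≤ ‖y‖ₑ + ‖y‖ₑ := by gcongr; exact enorm_le_iff_norm_le.2 hx.le
            _ = 2 * ‖y‖ₑ := (two_mul _).symm
  calc hardyOp μ norm (fun x ↦ ‖u x - u y‖ₑ ^ p * z x) y
      ≤ ∫⁻ x in {x | ‖x‖ < ‖y‖},
          (2 * ‖y‖ₑ) ^ a * (‖u x - u y‖ₑ ^ p / ‖x - y‖ₑ ^ a * z x) ∂μ :=
        setLIntegral_mono' (measurableSet_lt measurable_norm measurable_const) hbound
    _ ≤ ∫⁻ x, (2 * ‖y‖ₑ) ^ a * (‖u x - u y‖ₑ ^ p / ‖x - y‖ₑ ^ a * z x) ∂μ :=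
        setLIntegral_le_lintegral _ _
    _ = _ := lintegral_const_mul' _ _ (ENNReal.rpow_ne_top_of_nonneg hs (by finiteness))

lemma hardyOp_enorm_sub_mul_le {p p' s : ℝ} (hpp : p.HolderConjugate p')
    (hs : 0 ≤ Module.finrank ℝ E + s * p) (hv : Measurable v) (hz : Measurable z)
    (hu : StronglyMeasurable u) {y : E} (hL : gagliardoDensity μ p s z u y ≠ ∞)
    (hM : hardyOp μ norm (dualWeight p v z) y ≠ ∞) :
    hardyOp μ norm (fun x ↦ ‖u x - u y‖ₑ * v x) y ≤
      ((2 * ‖y‖ₑ) ^ (Module.finrank ℝ E + s * p) * gagliardoDensity μ p s z u y) ^ (1 / p) *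
        hardyOp μ norm (dualWeight p v z) y ^ (1 / p') := by
  have hI := hardyOp_enorm_sub_rpow_mul_le (μ := μ) (z := z) (u := u) hpp.pos hs y
  have hI_top : hardyOp μ norm (fun x ↦ ‖u x - u y‖ₑ ^ p * z x) y ≠ ∞ :=
    ne_top_of_le_ne_top (ENNReal.mul_ne_top (by finiteness) hL) hI
  refine (lintegral_mul_le_weighted_Lp_mul_Lq hpp
    (hu.sub stronglyMeasurable_const).enorm hv hz hI_top hM).trans (mul_le_mul_left ?_ _)
  exact ENNReal.rpow_le_rpow hI hpp.one_div_nonneg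

variable [FiniteDimensional ℝ E] [μ.IsAddHaarMeasure]

lemma measure_norm_eq_eq_zero [Nontrivial E] (r : ℝ) : μ {x | ‖x‖ = r} = 0 := by
  have h := Measure.addHaar_sphere μ (0 : E) r
  simpa only [sphere, dist_zero_right] using h

lemma measure_ball_norm [Nontrivial E] (x : E) :
    μ (ball 0 ‖x‖) = ‖x‖ₑ ^ (Module.finrank ℝ E : ℝ) * μ (ball 0 1) := by
  rw [Measure.addHaar_ball μ _ (norm_nonneg x), ENNReal.ofReal_pow (norm_nonneg x), ofReal_norm,
    ENNReal.rpow_natCast]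

variable [Nontrivial E]

lemma weightRatio_rpow_mul_hardyOp_le {p p' q s : ℝ} (hpp : p.HolderConjugate p') (hq : 0 < q)
    (hs : 0 ≤ Module.finrank ℝ E + s * p) (hv : Measurable v) (hz : Measurable z)
    (hu : StronglyMeasurable u) {y : E} (hy : y ≠ 0) (hA₀ : hardyWeight μ p p' q v z y ≠ 0)
    (hA : hardyWeight μ p p' q v z y ≠ ∞) :
    weightRatio q s (hardyWeight μ p p' q v z) (hardyOp μ norm v) y ^ (1 / q) *
        hardyOp μ norm (fun x ↦ ‖u x - u y‖ₑ * v x) y ≤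
      (2 ^ (Module.finrank ℝ E + s * p) / μ (ball 0 1)) ^ (1 / p) *
        (v y ^ (1 / q) * gagliardoDensity μ p s z u y ^ (1 / p)) := by
  have hp : 0 ≤ 1 / p := hpp.one_div_nonneg
  have hr₀ : ‖y‖ₑ ≠ 0 := enorm_ne_zero.2 hy
  have hβ₀ : μ (ball 0 ‖y‖) ≠ 0 := (measure_ball_pos μ _ (norm_pos_iff.2 hy)).ne'
  have hβ : μ (ball 0 ‖y‖) ≠ ∞ := measure_ball_lt_top.ne
  have hω₀ : μ (ball (0 : E) 1) ≠ 0 := (measure_ball_pos μ _ one_pos).ne'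
  have hω : μ (ball (0 : E) 1) ≠ ∞ := measure_ball_lt_top.ne
  obtain ⟨hv₀, ⟨hK₀, hK⟩, hM₀, hM⟩ := hardyWeight_nondegenerate hpp.symm.pos hq hA₀ hA hβ
  have hconst := rpow_mul_rpow_neg_mul_inv_mul_two_mul_rpow hpp.pos hs hr₀ enorm_ne_top hω₀
  rw [← measure_ball_norm] at hconst
  rcases eq_or_ne (gagliardoDensity μ p s z u y) ∞ with hL | hL
  · have hc : (2 ^ (Module.finrank ℝ E + s * p) / μ (ball (0 : E) 1)) ^ (1 / p) ≠ 0 := by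
      simp [ENNReal.rpow_eq_zero_iff, hω, ENNReal.div_eq_zero_iff, ENNReal.div_eq_top, hω₀]
    have hvq : v y ^ (1 / q) ≠ 0 := by simp [ENNReal.rpow_eq_zero_iff, hv₀, hq.le]
    rw [hL, ENNReal.top_rpow_of_pos hpp.one_div_pos, ENNReal.mul_top hvq, ENNReal.mul_top hc]
    exact le_top
  rw [weightRatio_hardyWeight_rpow hq hK₀ hK]
  set β := μ (ball 0 ‖y‖)
  set M := hardyOp μ norm (dualWeight p v z) y
  set L := gagliardoDensity μ p s z u y
  calc (β⁻¹ * M) ^ (-(1 / p')) * β⁻¹ * (‖y‖ₑ ^ s)⁻¹ * v y ^ (1 / q) *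
        hardyOp μ norm (fun x ↦ ‖u x - u y‖ₑ * v x) y
      ≤ (β⁻¹ * M) ^ (-(1 / p')) * β⁻¹ * (‖y‖ₑ ^ s)⁻¹ * v y ^ (1 / q) *
          (((2 * ‖y‖ₑ) ^ (Module.finrank ℝ E + s * p) * L) ^ (1 / p) * M ^ (1 / p')) := by
        gcongr
        exact hardyOp_enorm_sub_mul_le hpp hs hv hz hu hL hM
    _ = (β⁻¹ * M) ^ (-(1 / p')) * β⁻¹ * M ^ (1 / p') * (‖y‖ₑ ^ s)⁻¹ *
          ((2 * ‖y‖ₑ) ^ (Module.finrank ℝ E + s * p)) ^ (1 / p) *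
            (v y ^ (1 / q) * L ^ (1 / p)) := by
        rw [ENNReal.mul_rpow_of_nonneg _ _ hp]
        ring
    _ = _ := by rw [inv_mul_rpow_neg_mul_inv_mul_rpow hpp hβ₀ hβ hM₀ hM, hconst]

lemma weightedProfile_le {p p' q s : ℝ} (hpp : p.HolderConjugate p') (hq : 0 < q)
    (hs : 0 ≤ Module.finrank ℝ E + s * p) (hv : Measurable v) (hz : Measurable z)
    (hu : StronglyMeasurable u) {y : E} (hy : y ≠ 0)
    (hΦ : weightedProfile q s (hardyWeight μ p p' q v z) u y ≠ ∞) :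
    weightedProfile q s (hardyWeight μ p p' q v z) u y ≤
      (2 ^ (Module.finrank ℝ E + s * p) / μ (ball 0 1)) ^ (1 / p) *
          (v y ^ (1 / q) * gagliardoDensity μ p s z u y ^ (1 / p)) +
        weightRatio q s (hardyWeight μ p p' q v z) (hardyOp μ norm v) y ^ (1 / q) *
          hardyOp μ norm (fun x ↦ ‖u x‖ₑ * v x) y := by
  rcases eq_or_ne (hardyWeight μ p p' q v z y) 0 with hA₀ | hA₀
  · simp [weightedProfile, hA₀, hq]
  rcases eq_or_ne (hardyWeight μ p p' q v z y) ∞ with hA | hA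
  · have huy : u y = 0 := by
      by_contra huy
      refine hΦ ?_
      simp [weightedProfile, hA, hq, huy, ENNReal.top_mul, ENNReal.top_div, enorm_rpow_ne_top hy]
    simp [weightedProfile, huy]
  obtain ⟨-, ⟨hK₀, hK⟩, -⟩ := hardyWeight_nondegenerate hpp.symm.pos hq hA₀ hA
    measure_ball_lt_top.ne
  calc weightedProfile q s (hardyWeight μ p p' q v z) u y
      = weightRatio q s (hardyWeight μ p p' q v z) (hardyOp μ norm v) y ^ (1 / q) *
          (‖u y‖ₑ * hardyOp μ norm v y) := by
        rw [weightedProfile, weightRatio_rpow hq, mul_comm (hardyOp _ _ _ _),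
          ← ENNReal.mul_div_mul_right _ _ hK₀ hK, mul_assoc, ENNReal.mul_div_right_comm]
    _ ≤ weightRatio q s (hardyWeight μ p p' q v z) (hardyOp μ norm v) y ^ (1 / q) *
          (hardyOp μ norm (fun x ↦ ‖u x - u y‖ₑ * v x) y +
            hardyOp μ norm (fun x ↦ ‖u x‖ₑ * v x) y) := by
        gcongr
        exact enorm_mul_hardyOp_le hv hu y
    _ ≤ _ := by
        rw [mul_add]
        gcongr ?_ + _
        exact weightRatio_rpow_mul_hardyOp_le hpp hq hs hv hz hu hy hA₀ hA

lemma lintegral_weightRatio_mul_hardyOp_rpow_le {q q' s : ℝ} (hqq : q.HolderConjugate q')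
    {A : E → ℝ≥0∞} (hA : Measurable A) (hv : Measurable v) (hu : StronglyMeasurable u)
    (hκ : hardyConst μ q q' s A v ≠ ∞) (hΦ : ∫⁻ x, weightedProfile q s A u x ^ q ∂μ ≠ ∞) :
    (∫⁻ y, (weightRatio q s A (hardyOp μ norm v) y ^ (1 / q) *
        hardyOp μ norm (fun x ↦ ‖u x‖ₑ * v x) y) ^ q ∂μ) ^ (1 / q) ≤
      hardyConst μ q q' s A v * (∫⁻ x, weightedProfile q s A u x ^ q ∂μ) ^ (1 / q) := by
  have hpow : ∀ c : ℝ, 0 < c → ENNReal.ofReal c ^ (1 / c) ≠ 0 := fun c hc ↦ by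
    simp [ENNReal.rpow_eq_zero_iff, hc]
  have hD : muckenhouptConst μ q q' (weightRatio q s A (hardyOp μ norm v))
      (weightRatio q s A v) ≠ ∞ :=
    (ENNReal.lt_top_of_mul_ne_top_left (ENNReal.lt_top_of_mul_ne_top_left hκ
      (hpow q hqq.pos)).ne (hpow q' hqq.symm.pos)).ne
  have hne : ∀ᵐ x ∂μ, x ≠ 0 := Measure.ae_ne μ 0
  have hwΦ : ∫⁻ x, weightRatio q s A v x * (‖u x‖ₑ * v x) ^ q ∂μ ≤
      ∫⁻ x, weightedProfile q s A u x ^ q ∂μ :=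
    lintegral_mono_ae (hne.mono fun x hx ↦ weightRatio_mul_rpow_le hqq.pos A v u hx)
  have hU := measurable_weightRatio (q := q) (s := s) hA (measurable_hardyOp measurable_norm
    (μ := μ) (f := v))
  have hHardy := lintegral_mul_hardyOp_rpow_le measurable_norm measure_norm_eq_eq_zero hqq hU
    (measurable_weightRatio hA hv) (hu.enorm.mul hv) hD
    (hne.mono fun x hx ↦ hardyOp_mul_hardyOp_le_muckenhouptConst hqq.one_div_nonneg _ _ hx)
    (ne_top_of_le_ne_top hΦ hwΦ)
  rw [one_div, ENNReal.rpow_inv_le_iff hqq.pos, ENNReal.mul_rpow_of_nonneg _ _ hqq.nonneg,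
    ENNReal.rpow_inv_rpow hqq.pos.ne']
  calc ∫⁻ y, (weightRatio q s A (hardyOp μ norm v) y ^ q⁻¹ *
        hardyOp μ norm (fun x ↦ ‖u x‖ₑ * v x) y) ^ q ∂μ
      = ∫⁻ y, weightRatio q s A (hardyOp μ norm v) y *
          hardyOp μ norm (fun x ↦ ‖u x‖ₑ * v x) y ^ q ∂μ := by
        simp only [ENNReal.mul_rpow_of_nonneg _ _ hqq.nonneg, ENNReal.rpow_inv_rpow hqq.pos.ne']
    _ ≤ _ := hHardy.trans (mul_le_mul_right hwΦ _)

theorem fractional_hardy_sobolev_inequality {p p' q q' s : ℝ} (hpp : p.HolderConjugate p')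
    (hqq : q.HolderConjugate q') (hs : 0 ≤ Module.finrank ℝ E + s * p) (hv : Measurable v)
    (hz : Measurable z) (hκ : hardyConst μ q q' s (hardyWeight μ p p' q v z) v < 1)
    (hu : StronglyMeasurable u)
    (hΦ : ∫⁻ x, weightedProfile q s (hardyWeight μ p p' q v z) u x ^ q ∂μ ≠ ∞) :
    (∫⁻ x, weightedProfile q s (hardyWeight μ p p' q v z) u x ^ q ∂μ) ^ (1 / q) ≤
      (2 ^ (Module.finrank ℝ E + s * p) / μ (ball 0 1)) ^ (1 / p) *
          (∫⁻ y, gagliardoDensity μ p s z u y ^ (q / p) * v y ∂μ) ^ (1 / q) /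
        (1 - hardyConst μ q q' s (hardyWeight μ p p' q v z) v) := by
  set A := hardyWeight μ p p' q v z
  set c := (2 ^ (Module.finrank ℝ E + s * p) / μ (ball (0 : E) 1)) ^ (1 / p)
  have hA : Measurable A := measurable_hardyWeight hv
  have hΦ_meas : Measurable (weightedProfile q s A u) := measurable_weightedProfile hA hu
  have hL := measurable_gagliardoDensity (μ := μ) (p := p) (s := s) hu hz
  have hU : Measurable (weightRatio q s A (hardyOp μ norm v)) :=
    measurable_weightRatio hA (measurable_hardyOp measurable_norm)
  refine le_div_one_sub_of_le_add_mul (ENNReal.rpow_ne_top_of_nonneg hqq.one_div_nonneg hΦ) hκ ?_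
  have henergy : (∫⁻ y, (c * (v y ^ (1 / q) * gagliardoDensity μ p s z u y ^ (1 / p))) ^ q
      ∂μ) ^ (1 / q) = c * (∫⁻ y, gagliardoDensity μ p s z u y ^ (q / p) * v y ∂μ) ^ (1 / q) := by
    have hexp : 1 / p * q = q / p := by ring
    rw [lintegral_const_mul_rpow_rpow hqq.pos (by fun_prop)]
    simp only [ENNReal.mul_rpow_of_nonneg _ _ hqq.nonneg, ← ENNReal.rpow_mul,
      one_div_mul_cancel hqq.pos.ne', ENNReal.rpow_one, hexp, mul_comm (v _)]
  calc (∫⁻ x, weightedProfile q s A u x ^ q ∂μ) ^ (1 / q)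
      ≤ (∫⁻ y, (c * (v y ^ (1 / q) * gagliardoDensity μ p s z u y ^ (1 / p)) +
          weightRatio q s A (hardyOp μ norm v) y ^ (1 / q) *
            hardyOp μ norm (fun x ↦ ‖u x‖ₑ * v x) y) ^ q ∂μ) ^ (1 / q) := by
        refine ENNReal.rpow_le_rpow (lintegral_mono_ae ?_) hqq.one_div_nonneg
        filter_upwards [Measure.ae_ne μ 0, ae_lt_top (hΦ_meas.pow_const q) hΦ] with y hy hΦy
        exact ENNReal.rpow_le_rpow (weightedProfile_le hpp hqq.pos hs hv hz hu hy
          ((ENNReal.rpow_lt_top_iff_of_pos hqq.pos).1 hΦy).ne) hqq.nonneg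
    _ ≤ _ := ENNReal.lintegral_Lp_add_le (by fun_prop)
        ((hU.pow_const _).mul (measurable_hardyOp measurable_norm)).aemeasurable hqq.lt.le
    _ ≤ _ := add_le_add henergy.le
        (lintegral_weightRatio_mul_hardyOp_rpow_le hqq hA hv hu (hκ.trans one_lt_top).ne hΦ)

theorem logarithmic_fractional_hardy_sobolev_inequality_general {p p' q q' s : ℝ}
    (hpp : p.HolderConjugate p') (hqq : q.HolderConjugate q') (hpq : p < q)
    (hs : 0 ≤ Module.finrank ℝ E + s * p) (hv : Measurable v) (hz : Measurable z)
    (hκ : hardyConst μ q q' s (hardyWeight μ p p' q v z) v < 1) :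
    ∃ C : ℝ, 0 < C ∧ ∀ (u : E → F) (Φ : E → ℝ≥0∞), StronglyMeasurable u →
      Φ = weightedProfile q s (hardyWeight μ p p' q v z) u →
      ∫⁻ x, Φ x ^ p ∂μ ≠ ∞ → ∫⁻ x, Φ x ^ q ∂μ ≠ ∞ → ¬ (∀ᵐ x ∂μ, Φ x = 0) →
      entropy μ (fun x ↦ (Φ x).toReal ^ p / (∫⁻ x, Φ x ^ p ∂μ).toReal) ≤
        ((q / (q - p) : ℝ) : EReal) * ENNReal.log (ENNReal.ofReal C *
          (∫⁻ y, gagliardoDensity μ p s z u y ^ (q / p) * v y ∂μ) ^ (p / q) /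
            ∫⁻ x, Φ x ^ p ∂μ) := by
  set κ := hardyConst μ q q' s (hardyWeight μ p p' q v z) v
  set c := (2 ^ (Module.finrank ℝ E + s * p) / μ (ball (0 : E) 1)) ^ (1 / p) / (1 - κ)
  have hω₀ : μ (ball (0 : E) 1) ≠ 0 := (measure_ball_pos μ _ one_pos).ne'
  have hω : μ (ball (0 : E) 1) ≠ ∞ := measure_ball_lt_top.ne
  have hc : c ^ p ≠ ∞ := by
    have h : 1 - κ ≠ 0 := (tsub_pos_of_lt hκ).ne'
    have := hpp.nonneg
    finiteness
  have hc₀ : c ^ p ≠ 0 := by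
    have h : 1 - κ ≠ ∞ := by finiteness
    simp [c, ENNReal.rpow_eq_zero_iff, ENNReal.div_eq_zero_iff, ENNReal.div_eq_top, hpp.pos,
      hpp.nonneg, hω, hω₀, h]
  refine ⟨(c ^ p).toReal, ENNReal.toReal_pos hc₀ hc, fun u Φ hu hΦu hΦp hΦq hΦ₀ ↦ ?_⟩
  have hΦ : Measurable Φ := hΦu ▸ measurable_weightedProfile (measurable_hardyWeight hv) hu
  have hsobolev := fractional_hardy_sobolev_inequality hpp hqq hs hv hz hκ hu (hΦu ▸ hΦq)
  rw [← hΦu] at hsobolev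
  have hpow : (∫⁻ x, Φ x ^ q ∂μ) ^ (p / q) ≤
      c ^ p * (∫⁻ y, gagliardoDensity μ p s z u y ^ (q / p) * v y ∂μ) ^ (p / q) := by
    have hexp : 1 / q * p = p / q := by ring
    have h := ENNReal.rpow_le_rpow hsobolev hpp.nonneg
    rwa [ENNReal.mul_div_right_comm, ENNReal.mul_rpow_of_nonneg _ _ hpp.nonneg, ← ENNReal.rpow_mul,
      ← ENNReal.rpow_mul, hexp] at h
  refine (entropy_rpow_div_le hpp.pos hpq hΦ hΦ₀ hΦp hΦq).trans ?_
  rw [ENNReal.ofReal_toReal hc]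
  have hqp : (0 : EReal) ≤ ((q / (q - p) : ℝ) : EReal) :=
    EReal.coe_nonneg.2 (div_nonneg hqq.nonneg (sub_nonneg.2 hpq.le))
  exact mul_le_mul_of_nonneg_left (ENNReal.log_monotone (ENNReal.div_le_div_right hpow _)) hqp

end

/-- logarithmic fractional Hardy–Sobolev type inequality on ℝ^N
(Euclidean case of homogeneous Lie groups, Q = N).  Here Φ = A^{1/q}|u|/|x|^s
(as an ℝ≥0∞-valued function), the L^p ∩ L^q membership and non-vanishing of Φ
are the stated hypotheses, the entropy on the left is encoded in `EReal` as the
difference of the lower integrals of the positive and negative parts, and the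
logarithm on the right is the `ENNReal.log : ℝ≥0∞ → EReal`, so that an infinite
right-hand side is treated correctly. -/
theorem logarithmic_fractional_hardy_sobolev_inequality
    (N : ℕ) (hN : 1 ≤ N) (p q p' q' s S : ℝ) (hp : 1 < p) (hpq : p < q)
    (hs : -(N / p) < s)
    (hp' : p' = p / (p - 1)) (hq' : q' = q / (q - 1))
    (hS : ENNReal.ofReal S = N * volume (ball (0 : EuclideanSpace ℝ (Fin N)) 1))
    (v z : EuclideanSpace ℝ (Fin N) → ℝ)
    (hv_meas : Measurable v) (hz_meas : Measurable z)
    (hv_nonneg : ∀ x, 0 ≤ v x) (hz_nonneg : ∀ x, 0 ≤ z x)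
    (Cv A : EuclideanSpace ℝ (Fin N) → ℝ≥0∞)
    (hCv : ∀ x, Cv x = ∫⁻ y in ball (0 : EuclideanSpace ℝ (Fin N)) ‖x‖,
        ENNReal.ofReal (v y))
    (hA : ∀ x, A x =
        ((volume (ball (0 : EuclideanSpace ℝ (Fin N)) ‖x‖))⁻¹ *
          ∫⁻ y in ball (0 : EuclideanSpace ℝ (Fin N)) ‖x‖,
            (ENNReal.ofReal (v y) ^ p / ENNReal.ofReal (z y)) ^ (1 / (p - 1)))
          ^ (-(q / p')) *
        (Cv x / volume (ball (0 : EuclideanSpace ℝ (Fin N)) ‖x‖)) ^ q *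
        ENNReal.ofReal (v x))
    (D₁ : ℝ)
    (hD₁ : (⨆ x : {x : EuclideanSpace ℝ (Fin N) // x ≠ 0},
        (∫⁻ y in (ball (0 : EuclideanSpace ℝ (Fin N)) ‖x.1‖)ᶜ,
            A y / (Cv y ^ q * ENNReal.ofReal ‖y‖ ^ (s * q))) ^ (1 / q) *
        (∫⁻ y in ball (0 : EuclideanSpace ℝ (Fin N)) ‖x.1‖,
            (A y / (ENNReal.ofReal (v y) ^ q *
              ENNReal.ofReal ‖y‖ ^ (s * q))) ^ (1 - q')) ^ (1 / q'))
        = ENNReal.ofReal D₁)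
    (hsmall : D₁ * q' ^ (1 / q') * q ^ (1 / q) < 1) :
    ∃ C : ℝ, 0 < C ∧
      ∀ (u : EuclideanSpace ℝ (Fin N) → ℂ)
        (Φ : EuclideanSpace ℝ (Fin N) → ℝ≥0∞) (Ip : ℝ),
        Measurable u →
        (∀ x, Φ x = A x ^ (1 / q) * ENNReal.ofReal ‖u x‖ /
            ENNReal.ofReal ‖x‖ ^ s) →
        (∫⁻ x, Φ x ^ p) ≠ ∞ → (∫⁻ x, Φ x ^ q) ≠ ∞ →
        ¬ (∀ᵐ x, Φ x = 0) →
        Ip = (∫⁻ x, Φ x ^ p).toReal →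
        ((∫⁻ x, ENNReal.ofReal
            (((Φ x).toReal ^ p / Ip) *
              Real.log ((Φ x).toReal ^ p / Ip)) : ℝ≥0∞) : EReal)
          - ((∫⁻ x, ENNReal.ofReal
            (-(((Φ x).toReal ^ p / Ip) *
              Real.log ((Φ x).toReal ^ p / Ip))) : ℝ≥0∞) : EReal)
        ≤ (((q / (q - p)) : ℝ) : EReal) *
            ENNReal.log (ENNReal.ofReal C *
              (∫⁻ y, (∫⁻ x,
                  ENNReal.ofReal ‖u x - u y‖ ^ p /
                    ENNReal.ofReal ‖x - y‖ ^ ((N : ℝ) + s * p) *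
                    ENNReal.ofReal (z x)) ^ (q / p) *
                ENNReal.ofReal (v y)) ^ (p / q) /
              ENNReal.ofReal Ip) := by
  set V : EuclideanSpace ℝ (Fin N) → ℝ≥0∞ := fun x ↦ ENNReal.ofReal (v x)
  set Z : EuclideanSpace ℝ (Fin N) → ℝ≥0∞ := fun x ↦ ENNReal.ofReal (z x)
  have : Nonempty (Fin N) := ⟨⟨0, hN⟩⟩
  have hpp : p.HolderConjugate p' := hp' ▸ .conjExponent hp
  have hqq : q.HolderConjugate q' := hq' ▸ .conjExponent (hp.trans hpq)
  have hs' : 0 ≤ (Module.finrank ℝ (EuclideanSpace ℝ (Fin N)) : ℝ) + s * p := by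
    rw [finrank_euclideanSpace_fin]
    rw [← neg_div, div_lt_iff₀ hpp.pos] at hs
    linarith
  obtain rfl : Cv = hardyOp volume norm V := funext fun x ↦ (hCv x).trans (hardyOp_norm V x).symm
  obtain rfl : A = hardyWeight volume p p' q V Z := funext fun x ↦ by
    rw [hA, hardyWeight, hardyOp_norm (dualWeight p V Z)]
    rfl
  have hκ := hardyConst_lt_one hqq (A := hardyWeight volume p p' q V Z) (v := V)
    (by simpa only [muckenhouptConst, weightRatio, ofReal_norm] using hD₁) hsmall
  obtain ⟨C, hC, h⟩ := logarithmic_fractional_hardy_sobolev_inequality_general (F := ℂ) hpp hqq hpq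
    hs' hv_meas.ennreal_ofReal hz_meas.ennreal_ofReal hκ
  refine ⟨C, hC, fun u Φ Ip hu hΦ hΦp hΦq hΦ₀ hIp ↦ ?_⟩
  simp only [ofReal_norm] at hΦ ⊢
  rw [hIp, ENNReal.ofReal_toReal hΦp]
  simpa only [entropy, gagliardoDensity, finrank_euclideanSpace_fin] using
    h u Φ hu.stronglyMeasurable (funext hΦ) hΦp hΦq hΦ₀
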